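/- arXiv:1903.09354 — 4 statements merged into one kernel-verified Lean document; each statement's English description precedes it below -/
import Mathlib

section
/- Let n ∈ ℕ and let k < 2^n have base-2 representation with digits k_1, …, k_n, where k_1 is the least significant bit, so k = Σ_{i=1}^n k_i · 2^{i−1}. Define the predicates H^k_i on bit-vectors x = (x_1, …, x_n) recursively by H^k_0(x) = False and H^k_i(x) = (x_i ∨ H^k_{i−1}(x)) if k_i = 1, and H^k_i(x) = (x_i ∧ H^k_{i−1}(x)) if k_i = 0. Then for every bit-vector x ∈ (Fin n → Bool), H^k_n applied to the bitwise negation of x holds if and only if the unsigned-integer value Σ_{i=1}^n x_i · 2^{i−1} of x is strictly less than k. -/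
/-- The recursive gadget `H^k_i` of Chakraborty et al.: `H^k_0(x) = false` and
`H^k_{i+1}(x) = x_{i+1} ∨ H^k_i(x)` if the `(i+1)`-st base-2 digit of `k`
(least significant first, i.e. `Nat.testBit k i`) is `1`, and
`H^k_{i+1}(x) = x_{i+1} ∧ H^k_i(x)` otherwise.  Bits are zero-indexed here:
`x i` is the `(i+1)`-st (i.e. `2 ^ i`-valued) bit. -/
def Hgadget (k : ℕ) (x : ℕ → Bool) : ℕ → Bool
  | 0 => false
  | i + 1 => if Nat.testBit k i then x i || Hgadget k x i else x i && Hgadget k x i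

theorem Hgadget_aux (k : ℕ) (y : ℕ → Bool) (m : ℕ) :
    (∑ i ∈ Finset.range m, (!y i).toNat * 2 ^ i) < 2 ^ m ∧
    (Hgadget k y m = true ↔ (∑ i ∈ Finset.range m, (!y i).toNat * 2 ^ i) < k % 2 ^ m) := by
  induction m with
  | zero => simp [Hgadget, Nat.mod_one]
  | succ m ih =>
    obtain ⟨h1, h2⟩ := ih
    have h3 : k % 2 ^ m < 2 ^ m := Nat.mod_lt _ (by positivity)
    rw [Finset.sum_range_succ, Nat.mod_pow_succ, ← Nat.toNat_testBit, Hgadget, pow_succ]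
    generalize (∑ i ∈ Finset.range m, (!y i).toNat * 2 ^ i) = S at *
    generalize k % 2 ^ m = r at *
    generalize 2 ^ m = p at *
    cases hb : k.testBit m <;> cases hy : y m <;> simp [h2] <;> omega

/-- `H^k_n` applied to the bitwise negation of `x` holds iff the unsigned-integer
value `Σ_{i<n} x_i · 2^i` of `x` is strictly less than `k`. -/
theorem Hgadget_neg_iff_lt (n k : ℕ) (hk : k < 2 ^ n) (x : Fin n → Bool) :
    Hgadget k (fun i => if h : i < n then !(x ⟨i, h⟩) else false) n = true ↔
      (∑ i : Fin n, (x i).toNat * 2 ^ (i : ℕ)) < k := by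
  have h := (Hgadget_aux k (fun i => if h : i < n then !(x ⟨i, h⟩) else false) n).2
  rw [h, Nat.mod_eq_of_lt hk, Finset.sum_range]
  simp
end

section
/- Let n ∈ ℕ and let k < 2^n have base-2 digits k_1, …, k_n (least significant first). Then the model count of the predicate H^k_n on bit-vectors of length n equals k, i.e., exactly k of the 2^n bit-vectors x satisfy H^k_n(x). -/
theorem Hgadget_congr (k : ℕ) (x y : ℕ → Bool) (n : ℕ) (h : ∀ i < n, x i = y i) :
    Hgadget k x n = Hgadget k y n := by
  induction n with
  | zero => rfl
  | succ n ih =>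
    simp only [Hgadget]
    rw [ih (fun i hi => h i (by omega)), h n (by omega)]

theorem Hgadget_count_mod (n k : ℕ) :
    (Finset.univ.filter fun x : Fin n → Bool =>
        Hgadget k (fun i => if h : i < n then x ⟨i, h⟩ else false) n = true).card = k % 2 ^ n := by
  induction n with
  | zero => simp [Hgadget, Nat.mod_one]
  | succ n ih =>
    rw [Nat.mod_pow_succ, ← Nat.toNat_testBit, ← ih, Finset.card_filter,
      ← (Fin.snocEquiv (fun _ : Fin (n + 1) => Bool)).sum_comp, Fintype.sum_prod_type]
    have key : ∀ (b : Bool) (x : Fin n → Bool),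
        Hgadget k (fun i => if h : i < n + 1 then
          (Fin.snocEquiv (fun _ : Fin (n + 1) => Bool)) (b, x) ⟨i, h⟩ else false) (n + 1) =
        if Nat.testBit k n then
          b || Hgadget k (fun i => if h : i < n then x ⟨i, h⟩ else false) n
        else b && Hgadget k (fun i => if h : i < n then x ⟨i, h⟩ else false) n := by
      intro b x
      simp only [Hgadget]
      rw [Hgadget_congr k _ (fun i => if h : i < n then x ⟨i, h⟩ else false) n]
      · simp [Fin.snocEquiv, Fin.snoc]
      · intro i hi
        simp [Fin.snocEquiv, Fin.snoc, hi, Nat.lt_succ_of_lt hi]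
    simp only [key]
    rw [Fintype.sum_bool, Finset.card_filter]
    cases hb : Nat.testBit k n
    · simp
    · simp [add_comm]

/-- The model count of `H^k_n` on bit-vectors of length `n` equals `k`. -/
theorem Hgadget_modelCount (n k : ℕ) (hk : k < 2 ^ n) :
    (Finset.univ.filter fun x : Fin n → Bool =>
        Hgadget k (fun i => if h : i < n then x ⟨i, h⟩ else false) n = true).card = k := by
  rw [Hgadget_count_mod, Nat.mod_eq_of_lt hk]
end

section
/- Let N, n ∈ ℕ and let a : Fin N → ℕ with m = Σ_{i} a(i), 0 < m, and m ≤ 2^n. Define the partial sums b(i) = Σ_{j < i} a(j) and the predicates φ_i(x) := (b(i) ≤ x ∧ x < b(i) + a(i)) on Fin (2^n). If x is drawn uniformly at random from Fin (2^n), then for every i < N the conditional probability that φ_i(x) holds given that x < m equals a(i) / m. Thus the common-denominator construction realizes any prescribed rational distribution (a(0)/m, …, a(N−1)/m) over a finite set of N outcomes. -/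
open MeasureTheory ProbabilityTheory

/-- The partial sums `b i = Σ_{j < i} a j` of `a : Fin N → ℕ`. -/
def partialSum {N : ℕ} (a : Fin N → ℕ) (i : Fin N) : ℕ :=
  ∑ j ∈ Finset.univ.filter fun j : Fin N => j < i, a j

/-- The measure of an interval `[u, u + k)` under the uniform distribution. -/
theorem uniform_interval (M u k : ℕ) [NeZero M] (h : u + k ≤ M) :
    (PMF.uniformOfFintype (Fin M)).toMeasure {x : Fin M | u ≤ (x : ℕ) ∧ (x : ℕ) < u + k} =
      (k : ENNReal) / (M : ENNReal) := by
  classical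
  rw [PMF.toMeasure_uniformOfFintype_apply _ (Set.toFinite _).measurableSet, Fintype.card_fin]
  congr 2
  rw [Fintype.card_subtype]
  rw [← Finset.card_map Fin.valEmbedding]
  have : (Finset.univ.filter fun x : Fin M =>
      x ∈ {x : Fin M | u ≤ (x : ℕ) ∧ (x : ℕ) < u + k}).map Fin.valEmbedding
      = Finset.Ico u (u + k) := by
    ext y
    simp only [Finset.mem_map, Finset.mem_filter, Finset.mem_univ, true_and, Set.mem_setOf_eq,
      Fin.valEmbedding_apply, Finset.mem_Ico]
    constructor
    · rintro ⟨x, hx, rfl⟩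
      exact hx
    · intro hy
      exact ⟨⟨y, by omega⟩, hy, rfl⟩
  rw [this, Nat.card_Ico]
  omega

theorem partialSum_add_le {N : ℕ} (a : Fin N → ℕ) (i : Fin N) :
    partialSum a i + a i ≤ ∑ j, a j := by
  classical
  unfold partialSum
  rw [add_comm, ← Finset.sum_insert (by simp)]
  exact Finset.sum_le_sum_of_subset (Finset.subset_univ _)

/-- Drawing `x` uniformly from `Fin (2 ^ n)`, the conditional probability of the
common-denominator predicate `φ_i(x) := b i ≤ x ∧ x < b i + a i` given `x < m`
(where `m = Σ_i a i`, `0 < m ≤ 2 ^ n`) equals `a i / m`: the construction realizes the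
rational distribution `(a 0 / m, …, a (N-1) / m)` over `N` outcomes. -/
theorem commonDenominator_condProb (N n : ℕ) (a : Fin N → ℕ)
    (hm : 0 < ∑ i, a i) (hmn : (∑ i, a i) ≤ 2 ^ n) (i : Fin N) :
    (PMF.uniformOfFintype (Fin (2 ^ n))).toMeasure[|{x : Fin (2 ^ n) | (x : ℕ) < ∑ j, a j}]
        {x : Fin (2 ^ n) | partialSum a i ≤ (x : ℕ) ∧ (x : ℕ) < partialSum a i + a i} =
      (a i : ENNReal) / ((∑ j, a j : ℕ) : ENNReal) := by
  have hle := partialSum_add_le a i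
  have h1 := uniform_interval (2 ^ n) 0 (∑ j, a j) (by omega)
  have h2 := uniform_interval (2 ^ n) (partialSum a i) (a i) (by omega)
  simp only [Nat.zero_le, true_and, zero_add] at h1
  rw [ProbabilityTheory.cond_apply (Set.toFinite _).measurableSet, Set.inter_eq_self_of_subset_right, h1, h2]
  · have hM : ((2 ^ n : ℕ) : ENNReal) ≠ 0 := by positivity
    have hM' : ((2 ^ n : ℕ) : ENNReal) ≠ ⊤ := ENNReal.natCast_ne_top _
    rw [ENNReal.inv_div (Or.inl hM') (Or.inl hM), ← ENNReal.mul_div_mul_left _ _ hM hM',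
      ENNReal.mul_div_mul_left _ _ hM hM', div_eq_mul_inv, div_eq_mul_inv, div_eq_mul_inv]
    rw [show ∀ p q r : ENNReal, p * q * (r * p⁻¹) = (p * p⁻¹) * (r * q) by intros; ring,
      ENNReal.mul_inv_cancel hM hM', one_mul]
  · intro x hx
    simp only [Set.mem_setOf_eq] at hx ⊢
    omega
end

section
/- Let r, k', m, n ∈ ℕ with 0 < m ≤ 2^r and k' ≤ m, and set p = k'/m. Draw x = (x_1, …, x_n) uniformly at random from (Fin (2^r))^n (n independent blocks of r unbiased coin flips each, interpreted as unsigned integers), and condition on the event that x_j < m for every j ∈ {1, …, n}. Then for every k ≤ n, the conditional probability that exactly k of the indices j satisfy x_j < k' equals (n choose k) · p^k · (1 − p)^{n−k}. That is, counting successes among n independent rational-bias coin flips realizes the Binomial distribution with parameters n and p = k'/m. -/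
open MeasureTheory ProbabilityTheory

lemma card_lt_aux (N a : ℕ) (h : a ≤ N) :
    (Finset.univ.filter fun x : Fin N => (x : ℕ) < a).card = a := by
  rw [Fin.card_filter_val_lt]
  exact min_eq_right h

lemma card_between_aux (N a b : ℕ) (hab : a ≤ b) (h : b ≤ N) :
    (Finset.univ.filter fun x : Fin N => a ≤ (x : ℕ) ∧ (x : ℕ) < b).card = b - a := by
  have e : (Finset.univ.filter fun x : Fin N => a ≤ (x : ℕ) ∧ (x : ℕ) < b) =
      (Finset.univ.filter fun x : Fin N => (x : ℕ) < b) \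
        (Finset.univ.filter fun x : Fin N => (x : ℕ) < a) := by
    ext x; simp; tauto
  rw [e, Finset.card_sdiff_of_subset, card_lt_aux N b h, card_lt_aux N a (hab.trans h)]
  intro x; simp; omega

lemma card_valid_aux (N m n : ℕ) (h : m ≤ N) :
    (Finset.univ.filter fun x : Fin n → Fin N => ∀ j, (x j : ℕ) < m).card = m ^ n := by
  have e : (Finset.univ.filter fun x : Fin n → Fin N => ∀ j, (x j : ℕ) < m) =
      Fintype.piFinset fun _ => Finset.univ.filter fun x : Fin N => (x : ℕ) < m := by
    ext x; simp
  rw [e, Fintype.card_piFinset]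
  simp only [card_lt_aux N m h, Finset.prod_const, Finset.card_univ, Fintype.card_fin]

lemma card_succ_aux (N a m n k : ℕ) (ham : a ≤ m) (h : m ≤ N) :
    (Finset.univ.filter fun x : Fin n → Fin N => (∀ j, (x j : ℕ) < m) ∧
      (Finset.univ.filter fun j : Fin n => (x j : ℕ) < a).card = k).card =
      n.choose k * (a ^ k * (m - a) ^ (n - k)) := by
  rw [Finset.card_eq_sum_card_fiberwise
    (f := fun x : Fin n → Fin N => Finset.univ.filter fun j : Fin n => (x j : ℕ) < a)
    (t := Finset.powersetCard k Finset.univ)]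
  · rw [Finset.sum_const_nat (m := a ^ k * (m - a) ^ (n - k))]
    · simp
    intro S hS
    have hS : S.card = k := by simpa using hS
    have e : (Finset.filter (fun x : Fin n → Fin N =>
        (Finset.univ.filter fun j : Fin n => (x j : ℕ) < a) = S)
        (Finset.univ.filter fun x : Fin n → Fin N => (∀ j, (x j : ℕ) < m) ∧
      (Finset.univ.filter fun j : Fin n => (x j : ℕ) < a).card = k)) =
        Fintype.piFinset fun j => if j ∈ S then
          (Finset.univ.filter fun x : Fin N => (x : ℕ) < a) else
          (Finset.univ.filter fun x : Fin N => a ≤ (x : ℕ) ∧ (x : ℕ) < m) := by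
      ext x
      simp only [Finset.mem_filter, Finset.mem_univ, true_and, Fintype.mem_piFinset]
      constructor
      · rintro ⟨⟨h1, -⟩, rfl⟩ j
        have := h1 j
        by_cases hj : (x j : ℕ) < a
        · simp [hj]
        · simp [hj, this]; omega
      · intro hx
        have e2 : (Finset.univ.filter fun j : Fin n => (x j : ℕ) < a) = S := by
          ext j
          have := hx j
          by_cases hj : j ∈ S
          · simpa [hj] using this
          · simp [hj] at this; simp [hj]; omega
        refine ⟨⟨fun j => ?_, by rw [e2, hS]⟩, e2⟩
        have := hx j
        by_cases hj : j ∈ S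
        · simp [hj] at this; omega
        · simp [hj] at this; omega
    rw [e, Fintype.card_piFinset]
    have e3 : ∀ j, (if j ∈ S then
          (Finset.univ.filter fun x : Fin N => (x : ℕ) < a) else
          (Finset.univ.filter fun x : Fin N => a ≤ (x : ℕ) ∧ (x : ℕ) < m)).card =
          if j ∈ S then a else m - a := by
      intro j
      split_ifs
      · exact card_lt_aux N a (ham.trans h)
      · exact card_between_aux N a m ham h
    simp only [e3]
    rw [Finset.prod_ite, Finset.prod_const, Finset.prod_const, Finset.filter_not]
    have e4 : Finset.univ.filter (fun j => j ∈ S) = S := by ext; simp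
    rw [e4, hS, Finset.card_sdiff_of_subset (Finset.subset_univ S), hS]
    simp
  · intro x hx
    simp at hx ⊢
    exact hx.2

/-- Binomial distribution from rational-bias coins: draw `n` independent blocks of `r`
unbiased coin flips (i.e. `x : Fin n → Fin (2 ^ r)` uniformly), condition on every block
being valid (`x j < m`), and count the successful trials (`x j < k'`).  For every `k ≤ n`,
the conditional probability of exactly `k` successes is `(n choose k) · p^k · (1-p)^(n-k)`
with `p = k' / m`. -/
theorem binomial_from_rational_coins (r k' m n : ℕ) (hm : 0 < m) (hmr : m ≤ 2 ^ r)
    (hk' : k' ≤ m) (k : ℕ) (hk : k ≤ n) :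
    (PMF.uniformOfFintype (Fin n → Fin (2 ^ r))).toMeasure[|{x | ∀ j, (x j : ℕ) < m}]
        {x | (Finset.univ.filter fun j : Fin n => (x j : ℕ) < k').card = k} =
      (n.choose k : ENNReal) * ((k' : ENNReal) / (m : ENNReal)) ^ k *
        (1 - (k' : ENNReal) / (m : ENNReal)) ^ (n - k) := by
  classical
  have hmeas : ∀ s : Set (Fin n → Fin (2 ^ r)), MeasurableSet s := fun s =>
    s.toFinite.measurableSet
  have hmu : ∀ (P : (Fin n → Fin (2 ^ r)) → Prop) [DecidablePred P],
      (PMF.uniformOfFintype (Fin n → Fin (2 ^ r))).toMeasure {x | P x} =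
      ((Finset.univ.filter P).card : ENNReal) /
        (Fintype.card (Fin n → Fin (2 ^ r)) : ENNReal) := by
    intro P _
    rw [PMF.toMeasure_uniformOfFintype_apply _ (hmeas _)]
    congr 2
    rw [Fintype.card_subtype]
    simp
  rw [ProbabilityTheory.cond_apply (hmeas _), ← Set.setOf_and, hmu, hmu,
    card_valid_aux _ _ _ hmr, card_succ_aux _ _ _ _ _ hk' hmr]
  have hm0 : (m : ENNReal) ≠ 0 := by exact_mod_cast hm.ne'
  have hmR : (m : ℝ) ≠ 0 := by exact_mod_cast hm.ne'
  have hN : (Fintype.card (Fin n → Fin (2 ^ r)) : ℝ) ≠ 0 := by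
    exact_mod_cast Fintype.card_ne_zero
  have hN0 : (Fintype.card (Fin n → Fin (2 ^ r)) : ENNReal) ≠ 0 := by
    exact_mod_cast Fintype.card_ne_zero
  generalize Fintype.card (Fin n → Fin (2 ^ r)) = M at *
  have hfrac : (k' : ENNReal) / (m : ENNReal) ≠ ⊤ :=
    ENNReal.div_ne_top (ENNReal.natCast_ne_top _) hm0
  have hle : (k' : ENNReal) / (m : ENNReal) ≤ 1 := by
    apply ENNReal.div_le_of_le_mul
    rw [one_mul]; exact_mod_cast hk'
  rw [← ENNReal.toReal_eq_toReal_iff']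
  · simp only [ENNReal.toReal_mul, ENNReal.toReal_inv, ENNReal.toReal_div, ENNReal.toReal_pow,
      ENNReal.toReal_natCast, ENNReal.toReal_sub_of_le hle ENNReal.one_ne_top,
      ENNReal.toReal_one]
    push_cast [Nat.cast_sub hk']
    have h1 : (1 - (k' : ℝ) / m) = (m - k') / m := by field_simp
    obtain ⟨d, rfl⟩ := Nat.exists_eq_add_of_le hk
    rw [h1, Nat.add_sub_cancel_left, div_pow, div_pow, pow_add]
    field_simp
  · apply ENNReal.mul_ne_top
    · rw [ENNReal.inv_ne_top]
      apply ENNReal.div_ne_zero.2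
      refine ⟨?_, ENNReal.natCast_ne_top _⟩
      exact_mod_cast (pow_pos hm n).ne'
    · exact ENNReal.div_ne_top (ENNReal.natCast_ne_top _) hN0
  · apply ENNReal.mul_ne_top
    · exact ENNReal.mul_ne_top (ENNReal.natCast_ne_top _) (ENNReal.pow_ne_top hfrac)
    · exact ENNReal.pow_ne_top (ENNReal.sub_ne_top ENNReal.one_ne_top)
end
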